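/- Let 0 ≤ a ≤ 1/2 and λ > −a². For every β > 4π, the supremum of ∫_{ℝ²} (e^{β|u|²} − 1)/|x|² dx over all complex-valued u ∈ C_0^∞(ℝ² \ {0}) satisfying ∫_{ℝ²} |∇_A u|² dx + λ ∫_{ℝ²} |u|²/|x|² dx ≤ 1 is infinite; i.e., the constant 4π in the magnetic Trudinger–Moser inequality is sharp. -/

import Mathlib

/-!
Test functions concentrating at the point `p = (1,0)`, away from the singularity of the potential,
already exhaust the constant `4π`. For a real-valued `u` the magnetic energy density is
`|∇u|² + a² u² / |x|²`, so the potential and the `λ`-term together contribute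
`(a² + λ) ∫ u² / |x|²`, which is of lower order along a concentrating sequence.

The sequence is a smooth version of Moser's: with `Φ(t) = t e^{-1/t}` for `t > 0` and `Φ = 0` on
`t ≤ 0`, put `u = c Φ(-½ log (4 (|x - p|² + ε²)))` with `ε = e^{-n}`. Because `Φ` is smooth,
`0 ≤ Φ' ≤ 1` and `Φ(t) ≥ t - 1`, polar coordinates around `p` bound the energy by
`2π c² (n + 2 (a² + λ))` (`energy_le`), with the sharp leading coefficient `2π`; the choice of `c`
makes this bound equal to `1`. On the square of side `e^{-n}` around `p` the function is at least
`c (n - B)` with `B = 1 + log 8 / 2`, so the exponential integral is at least a multiple of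
`e^{-2n} (e^{β c² (n - B)²} - 1)` (`exp_integral_ge`). Its exponent is `(β / 2π - 2) n + O(1)`,
which tends to infinity exactly when `β > 4π`.
-/

open MeasureTheory Real

/-- The squared pointwise norm `|∇_A u|²` of the magnetic gradient
`∇_A u = ∇u + i A u` for the Aharonov–Bohm potential
`A(x) = (a/|x|²)(x₂, -x₁)` on `ℝ² \ {0}`. -/
noncomputable def magGradSq (a : ℝ) (u : ℝ × ℝ → ℂ) (x : ℝ × ℝ) : ℝ :=
  ‖fderiv ℝ u x (1, 0) + Complex.I * ((a / (x.1 ^ 2 + x.2 ^ 2) * x.2 : ℝ) : ℂ) * u x‖ ^ 2 +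
  ‖fderiv ℝ u x (0, 1) + Complex.I * ((a / (x.1 ^ 2 + x.2 ^ 2) * (-x.1) : ℝ) : ℂ) * u x‖ ^ 2

/-! ### A smooth positive part -/

/-- The profile `t e^{-1/t}` for `t > 0`, and `0` for `t ≤ 0`: a smooth substitute for the positive
part of `t`, with slope at most `1` and within distance `1` of it. -/
noncomputable def smoothPos (t : ℝ) : ℝ := t * expNegInvGlue t

lemma smoothPos_contDiff : ContDiff ℝ (⊤ : ℕ∞) smoothPos :=
  contDiff_id.mul expNegInvGlue.contDiff

lemma smoothPos_of_nonpos {t : ℝ} (ht : t ≤ 0) : smoothPos t = 0 := by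
  simp [smoothPos, expNegInvGlue.zero_of_nonpos ht]

lemma smoothPos_of_pos {t : ℝ} (ht : 0 < t) : smoothPos t = t * exp (-t⁻¹) := by
  simp [smoothPos, expNegInvGlue, not_le.2 ht]

lemma smoothPos_nonneg (t : ℝ) : 0 ≤ smoothPos t := by
  rcases le_or_gt t 0 with h | h
  · rw [smoothPos_of_nonpos h]
  · rw [smoothPos_of_pos h]; positivity

lemma smoothPos_le {t : ℝ} (ht : 0 ≤ t) : smoothPos t ≤ t := by
  rcases ht.eq_or_lt with h | h
  · rw [← h, smoothPos_of_nonpos le_rfl]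
  · rw [smoothPos_of_pos h]
    have : exp (-t⁻¹) ≤ 1 := exp_le_one_iff.2 (by simpa using ht)
    nlinarith

lemma sub_one_le_smoothPos (t : ℝ) : t - 1 ≤ smoothPos t := by
  rcases le_or_gt t 0 with h | h
  · rw [smoothPos_of_nonpos h]; linarith
  · rw [smoothPos_of_pos h]
    have h1 := mul_le_mul_of_nonneg_left (add_one_le_exp (-t⁻¹)) h.le
    have h2 : t * (-t⁻¹ + 1) = t - 1 := by field_simp; ring
    linarith

lemma deriv_smoothPos_of_nonpos {t : ℝ} (ht : t ≤ 0) : deriv smoothPos t = 0 := by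
  apply IsLocalMin.deriv_eq_zero
  refine Filter.Eventually.of_forall fun y => ?_
  rw [smoothPos_of_nonpos ht]
  exact smoothPos_nonneg y

/-- The slope of the profile is `(1 + 1/t) e^{-1/t}`, so the bound is `1 + x ≤ e^x` at `x = 1/t`. -/
lemma deriv_smoothPos_sq_le (t : ℝ) : deriv smoothPos t ^ 2 ≤ 1 := by
  rcases le_or_gt t 0 with h | h
  · rw [deriv_smoothPos_of_nonpos h]; norm_num
  · have e : smoothPos =ᶠ[nhds t] fun s => s * exp (-s⁻¹) := by
      filter_upwards [lt_mem_nhds h] with s hs using smoothPos_of_pos hs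
    have d : HasDerivAt (fun s : ℝ => s * exp (-s⁻¹))
        (1 * exp (-t⁻¹) + t * (exp (-t⁻¹) * (-(-(t ^ 2)⁻¹)))) t :=
      (hasDerivAt_id t).mul ((hasDerivAt_inv h.ne').neg.exp)
    have e2 : 1 * exp (-t⁻¹) + t * (exp (-t⁻¹) * (-(-(t ^ 2)⁻¹))) = (t⁻¹ + 1) * exp (-t⁻¹) := by
      field_simp; ring
    rw [e.deriv_eq, d.deriv, e2]
    have h1 : (t⁻¹ + 1) * exp (-t⁻¹) ≤ 1 := by
      have := mul_le_mul_of_nonneg_right (add_one_le_exp t⁻¹) (exp_pos (-t⁻¹)).le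
      rwa [← exp_add, add_neg_cancel, exp_zero] at this
    have h0 : 0 ≤ (t⁻¹ + 1) * exp (-t⁻¹) := by positivity
    exact pow_le_one₀ h0 h1

/-! ### Smooth Moser functions and their magnetic energy density -/

/-- The regularised squared distance `|x - (1,0)|² + ε²`. -/
def regDist (ε : ℝ) (x : ℝ × ℝ) : ℝ := (x.1 - 1) ^ 2 + x.2 ^ 2 + ε ^ 2

/-- The regularised logarithm `log (1 / (2 √(|x - (1,0)|² + ε²)))`. -/
noncomputable def regLog (ε : ℝ) (x : ℝ × ℝ) : ℝ := -(1 / 2) * log (4 * regDist ε x)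

/-- A smooth Moser function of unnormalised height, concentrating at `(1,0)` as `ε → 0` and
supported in the closed disc of radius `1/2` around that point. -/
noncomputable def moser (ε : ℝ) (x : ℝ × ℝ) : ℝ := smoothPos (regLog ε x)

lemma regDist_pos {ε : ℝ} (hε : 0 < ε) (x : ℝ × ℝ) : 0 < regDist ε x := by
  unfold regDist; positivity

lemma regLog_nonpos {ε : ℝ} {x : ℝ × ℝ} (hx : 1 / 4 ≤ (x.1 - 1) ^ 2 + x.2 ^ 2) :
    regLog ε x ≤ 0 := by
  have : 0 ≤ log (4 * regDist ε x) := log_nonneg (by unfold regDist; nlinarith [sq_nonneg ε])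
  unfold regLog; linarith

lemma moser_eq_zero {ε : ℝ} {x : ℝ × ℝ} (hx : 1 / 4 ≤ (x.1 - 1) ^ 2 + x.2 ^ 2) :
    moser ε x = 0 := smoothPos_of_nonpos (regLog_nonpos hx)

lemma moser_contDiff {ε : ℝ} (hε : 0 < ε) : ContDiff ℝ (⊤ : ℕ∞) (moser ε) := by
  refine smoothPos_contDiff.comp (contDiff_const.mul (ContDiff.log ?_ ?_))
  · unfold regDist; fun_prop
  · intro x; have := regDist_pos hε x; positivity

lemma moser_hasFDerivAt {ε : ℝ} (hε : 0 < ε) (x : ℝ × ℝ) :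
    HasFDerivAt (moser ε) ((-(deriv smoothPos (regLog ε x)) / regDist ε x) •
      ((x.1 - 1) • ContinuousLinearMap.fst ℝ ℝ ℝ + x.2 • ContinuousLinearMap.snd ℝ ℝ ℝ)) x := by
  have hq := regDist_pos hε x
  have h1 : HasFDerivAt (regDist ε) ((2 : ℝ) •
      ((x.1 - 1) • ContinuousLinearMap.fst ℝ ℝ ℝ + x.2 • ContinuousLinearMap.snd ℝ ℝ ℝ)) x := by
    have := ((((hasFDerivAt_fst (𝕜 := ℝ) (p := x)).sub_const 1).pow 2).add
      ((hasFDerivAt_snd (𝕜 := ℝ) (p := x)).pow 2)).add_const (ε ^ 2)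
    refine HasFDerivAt.congr_fderiv (f := regDist ε) this ?_
    ext <;> simp
  have h2 := ((h1.const_mul 4).log (by positivity)).const_mul (-(1 / 2))
  have h3 : HasDerivAt smoothPos (deriv smoothPos (regLog ε x)) (regLog ε x) :=
    (smoothPos_contDiff.differentiable (by simp) _).hasDerivAt
  have h4 := h3.comp_hasFDerivAt x (f := regLog ε) h2
  refine h4.congr_fderiv ?_
  ext <;> simp <;> field_simp

/-- For the real function `c * moser ε` the magnetic energy density decouples into the Dirichlet
part and the potential part `a² |u|² / |x|²`. -/
lemma magGradSq_moser (a c : ℝ) {ε : ℝ} (hε : 0 < ε) (x : ℝ × ℝ) :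
    magGradSq a (fun x => ((c * moser ε x : ℝ) : ℂ)) x =
      c ^ 2 * (deriv smoothPos (regLog ε x) ^ 2 * ((x.1 - 1) ^ 2 + x.2 ^ 2) / regDist ε x ^ 2) +
      a ^ 2 * ((c * moser ε x) ^ 2 / (x.1 ^ 2 + x.2 ^ 2)) := by
  have h := (Complex.ofRealCLM.hasFDerivAt (x := c * moser ε x)).comp x
    ((moser_hasFDerivAt hε x).const_mul c)
  have h' : HasFDerivAt (fun x => ((c * moser ε x : ℝ) : ℂ)) _ x := h
  have key : ∀ p q : ℝ, ∀ w : ℝ, ‖(p : ℂ) + Complex.I * (q : ℂ) * (w : ℂ)‖ ^ 2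
      = p ^ 2 + (q * w) ^ 2 := by
    intro p q w
    rw [← Complex.normSq_eq_norm_sq, Complex.normSq_apply]
    simp; ring
  have hq := (regDist_pos hε x).ne'
  unfold magGradSq
  rw [h'.fderiv]
  simp only [ContinuousLinearMap.comp_apply, Complex.ofRealCLM_apply, key]
  simp
  by_cases h0 : x.1 ^ 2 + x.2 ^ 2 = 0
  · rw [h0]; simp; field_simp
  · field_simp; ring

/-! ### Functions supported near `(1,0)` and integration in polar coordinates -/

lemma sq_add_sq_ge {x : ℝ × ℝ} (hx : (x.1 - 1) ^ 2 + x.2 ^ 2 ≤ 1 / 4) :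
    1 / 4 ≤ x.1 ^ 2 + x.2 ^ 2 := by
  nlinarith [sq_nonneg (x.1 - 1), sq_nonneg x.2, sq_nonneg (x.1 - 1 + 1 / 2)]

lemma hasCompactSupport_of_disc {E : Type*} [Zero E] {g : ℝ × ℝ → E}
    (hg : ∀ x : ℝ × ℝ, 1 / 4 ≤ (x.1 - 1) ^ 2 + x.2 ^ 2 → g x = 0) : HasCompactSupport g := by
  refine HasCompactSupport.intro
    ((isCompact_Icc (a := (0 : ℝ)) (b := 2)).prod (isCompact_Icc (a := (-1 : ℝ)) (b := 1)))
    fun x hx => hg x ?_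
  by_contra! h
  apply hx
  simp only [Set.mem_prod, Set.mem_Icc]
  refine ⟨⟨?_, ?_⟩, ?_, ?_⟩ <;> nlinarith [sq_nonneg (x.1 - 1), sq_nonneg x.2]

/-- The weight `|x|⁻²` is harmless on functions supported in the disc of radius `1/2` around
`(1,0)`: there it may be replaced by the continuous weight `(max |x|² (1/4))⁻¹`. -/
lemma integrable_div {g : ℝ × ℝ → ℝ} (hc : Continuous g)
    (hg : ∀ x : ℝ × ℝ, 1 / 4 ≤ (x.1 - 1) ^ 2 + x.2 ^ 2 → g x = 0) :
    Integrable fun x : ℝ × ℝ => g x / (x.1 ^ 2 + x.2 ^ 2) := by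
  have e : (fun x : ℝ × ℝ => g x / (x.1 ^ 2 + x.2 ^ 2)) =
      fun x => g x / max (x.1 ^ 2 + x.2 ^ 2) (1 / 4) := by
    ext x
    rcases le_total (1 / 4) ((x.1 - 1) ^ 2 + x.2 ^ 2) with h | h
    · simp [hg x h]
    · rw [max_eq_left (sq_add_sq_ge h)]
  refine Continuous.integrable_of_hasCompactSupport ?_
    (hasCompactSupport_of_disc fun x hx => by simp [hg x hx])
  rw [e]
  refine hc.div (by fun_prop) fun x => ?_
  have : (1 / 4 : ℝ) ≤ max (x.1 ^ 2 + x.2 ^ 2) (1 / 4) := le_max_right _ _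
  linarith

/-- Integrating in polar coordinates around `(1,0)`: a radial majorant of the density (times the
Jacobian `r`) on the disc of radius `1/2` bounds the integral. -/
lemma integral_le_of_polar {F : ℝ × ℝ → ℝ} {G : ℝ → ℝ} (hF : ∀ x, 0 ≤ F x)
    (hG : ContinuousOn G (Set.Icc 0 (1 / 2)))
    (hz : ∀ x : ℝ × ℝ, 1 / 4 ≤ (x.1 - 1) ^ 2 + x.2 ^ 2 → F x = 0)
    (hFG : ∀ r θ : ℝ, 0 < r → r ≤ 1 / 2 → r * F (1 + r * cos θ, r * sin θ) ≤ G r) :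
    ∫ x, F x ≤ 2 * π * ∫ r in (0 : ℝ)..(1 / 2), G r := by
  have h1 : ∫ x, F x = ∫ x, F (x + (1, 0)) := (integral_add_right_eq_self F (1, 0)).symm
  rw [h1, ← integral_comp_polarCoord_symm]
  have hsub : Set.Ioc (0 : ℝ) (1 / 2) ×ˢ Set.Ioo (-π) π ⊆ polarCoord.target := by
    rintro ⟨r, θ⟩ ⟨hr, hθ⟩
    exact ⟨hr.1, hθ⟩
  have hms : MeasurableSet (Set.Ioc (0 : ℝ) (1 / 2) ×ˢ Set.Ioo (-π) π) :=
    measurableSet_Ioc.prod measurableSet_Ioo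
  have hpol : ∀ p : ℝ × ℝ, F (polarCoord.symm p + (1, 0)) =
      F (1 + p.1 * cos p.2, p.1 * sin p.2) := by
    intro p
    simp [polarCoord_symm_apply, add_comm]
  rw [setIntegral_eq_of_subset_of_forall_sdiff_eq_zero
    polarCoord.open_target.measurableSet hsub]
  · have hGi : IntegrableOn G (Set.Ioc (0 : ℝ) (1 / 2)) :=
      (hG.integrableOn_Icc).mono_set Set.Ioc_subset_Icc_self
    have hprod : ∫ p in Set.Ioc (0 : ℝ) (1 / 2) ×ˢ Set.Ioo (-π) π, G p.1 * 1 =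
        2 * π * ∫ r in (0 : ℝ)..(1 / 2), G r := by
      rw [Measure.volume_eq_prod, setIntegral_prod_mul G (fun _ => (1 : ℝ)),
        intervalIntegral.integral_of_le (by norm_num)]
      simp [pi_pos.le]
      ring
    rw [← hprod]
    refine integral_mono_of_nonneg ?_ ?_ ?_
    · filter_upwards [ae_restrict_mem hms] with p hp
      exact mul_nonneg hp.1.1.le (hF _)
    · have : Integrable (fun p : ℝ × ℝ => G p.1 * 1)
          ((volume.restrict (Set.Ioc (0 : ℝ) (1 / 2))).prod
            (volume.restrict (Set.Ioo (-π) π))) :=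
        Integrable.mul_prod hGi (integrable_const (1 : ℝ))
      rwa [Measure.prod_restrict, ← Measure.volume_eq_prod] at this
    · filter_upwards [ae_restrict_mem hms] with p hp
      rw [hpol, smul_eq_mul, mul_one]
      exact hFG p.1 p.2 hp.1.1 hp.1.2
  · rintro ⟨r, θ⟩ ⟨⟨hr, hθ⟩, hn⟩
    have hr' : 1 / 2 < r := by
      by_contra! h
      exact hn ⟨⟨hr, h⟩, hθ⟩
    rw [hpol, hz, smul_zero]
    have := sin_sq_add_cos_sq θ
    have e : (1 + r * cos θ - 1) ^ 2 + (r * sin θ) ^ 2 = r ^ 2 := by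
      linear_combination r ^ 2 * this
    change 1 / 4 ≤ (1 + r * cos θ - 1) ^ 2 + (r * sin θ) ^ 2
    rw [e]
    nlinarith

/-! ### The energy bound -/

/-- Since `t² ≤ 2 e^t` for `t ≥ 0`, the square of the logarithm is dominated by `1/r`. -/
lemma mul_moser_sq_le {ε : ℝ} {r : ℝ} (hr : 0 < r) {x : ℝ × ℝ}
    (hx : (x.1 - 1) ^ 2 + x.2 ^ 2 = r ^ 2) : r * moser ε x ^ 2 ≤ 1 := by
  unfold moser
  set t := regLog ε x with ht
  rcases le_or_gt t 0 with h | h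
  · simp [smoothPos_of_nonpos h]
  have h1 : smoothPos t ^ 2 ≤ t ^ 2 := pow_le_pow_left₀ (smoothPos_nonneg t) (smoothPos_le h.le) 2
  have h2 : t ^ 2 ≤ 2 * exp t := by
    have := quadratic_le_exp_of_nonneg h.le
    nlinarith
  have h3 : t ≤ -log (2 * r) := by
    have : log ((2 * r) ^ 2) ≤ log (4 * regDist ε x) := by
      apply log_le_log (by positivity)
      unfold regDist
      rw [hx]; nlinarith [sq_nonneg ε]
    rw [log_pow] at this
    rw [ht]; unfold regLog
    push_cast at this
    linarith
  have h4 : exp t ≤ (2 * r)⁻¹ := by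
    calc exp t ≤ exp (-log (2 * r)) := exp_le_exp.2 h3
      _ = (2 * r)⁻¹ := by rw [exp_neg, exp_log (by positivity)]
  calc r * smoothPos t ^ 2 ≤ r * (2 * (2 * r)⁻¹) := by gcongr; linarith
    _ = 1 := by field_simp

lemma integral_majorant (ε A B : ℝ) (hε : 0 < ε) :
    ∫ r in (0 : ℝ)..(1 / 2), (A * (r / (r ^ 2 + ε ^ 2)) + B) =
      A * (1 / 2 * log (1 / 4 + ε ^ 2) - log ε) + B / 2 := by
  have hd : ∀ r : ℝ, HasDerivAt (fun r => A * (1 / 2 * log (r ^ 2 + ε ^ 2)) + B * r)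
      (A * (r / (r ^ 2 + ε ^ 2)) + B) r := by
    intro r
    have hp : r ^ 2 + ε ^ 2 ≠ 0 := by positivity
    have := ((((((hasDerivAt_id r).pow 2).add_const (ε ^ 2)).log hp).const_mul (1 / 2)).const_mul
      A).add ((hasDerivAt_id r).const_mul B)
    refine HasDerivAt.congr_deriv this ?_
    simp only [Pi.pow_apply, id, Nat.cast_ofNat, mul_one, Nat.add_one_sub_one, pow_one]
    field_simp
  rw [intervalIntegral.integral_eq_sub_of_hasDerivAt (fun r _ => hd r)]
  · simp [log_pow]; ring_nf
  · apply Continuous.intervalIntegrable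
    have : ∀ r : ℝ, r ^ 2 + ε ^ 2 ≠ 0 := fun r => by positivity
    fun_prop (disch := assumption)

/-- The energy bound: up to the factor `c²`, the total energy of the Moser function at scale
`ε = e^{-n}` is at most `2π (n + 2 (a² + λ))`. -/
lemma energy_le (a lam c n : ℝ) (hn : 1 ≤ n) (hK : 0 < a ^ 2 + lam) :
    (∫ x : ℝ × ℝ, magGradSq a (fun x => ((c * moser (exp (-n)) x : ℝ) : ℂ)) x) +
        lam * ∫ x : ℝ × ℝ, ‖((c * moser (exp (-n)) x : ℝ) : ℂ)‖ ^ 2 / (x.1 ^ 2 + x.2 ^ 2) ≤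
      c ^ 2 * (2 * π * (n + 2 * (a ^ 2 + lam))) := by
  set ε := exp (-n) with hεn
  have hε : 0 < ε := exp_pos _
  have hreg : ∀ x, regDist ε x ≠ 0 := fun x => (regDist_pos hε x).ne'
  have hmc : Continuous (moser ε) := (moser_contDiff hε).continuous
  have hregc : Continuous (regDist ε) := by unfold regDist; fun_prop
  have hlc : Continuous (regLog ε) := by
    unfold regLog
    refine continuous_const.mul (Continuous.log (by fun_prop) fun x => ?_)
    have := regDist_pos hε x
    positivity
  have hdc : Continuous (deriv smoothPos) := smoothPos_contDiff.continuous_deriv (by simp)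
  set P : ℝ × ℝ → ℝ := fun x =>
    deriv smoothPos (regLog ε x) ^ 2 * ((x.1 - 1) ^ 2 + x.2 ^ 2) / regDist ε x ^ 2 with hP
  set Q : ℝ × ℝ → ℝ := fun x => (c * moser ε x) ^ 2 / (x.1 ^ 2 + x.2 ^ 2) with hQ
  have hPz : ∀ x : ℝ × ℝ, 1 / 4 ≤ (x.1 - 1) ^ 2 + x.2 ^ 2 → P x = 0 := fun x hx => by
    simp [hP, deriv_smoothPos_of_nonpos (regLog_nonpos hx)]
  have hQz : ∀ x : ℝ × ℝ, 1 / 4 ≤ (x.1 - 1) ^ 2 + x.2 ^ 2 → Q x = 0 := fun x hx => by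
    simp [hQ, moser_eq_zero hx]
  have hPi : Integrable P := by
    refine Continuous.integrable_of_hasCompactSupport ?_ (hasCompactSupport_of_disc hPz)
    refine Continuous.div (((hdc.comp hlc).pow 2).mul (by fun_prop)) (hregc.pow 2) fun x => ?_
    exact pow_ne_zero 2 (hreg x)
  have hQi : Integrable Q :=
    integrable_div (by fun_prop) fun x hx => by simp [moser_eq_zero hx]
  have e1 : ∫ x : ℝ × ℝ, magGradSq a (fun x => ((c * moser ε x : ℝ) : ℂ)) x =
      ∫ x, (c ^ 2 * P x + a ^ 2 * Q x) :=
    integral_congr_ae (Filter.Eventually.of_forall fun x => magGradSq_moser a c hε x)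
  have e2 : ∫ x : ℝ × ℝ, ‖((c * moser ε x : ℝ) : ℂ)‖ ^ 2 / (x.1 ^ 2 + x.2 ^ 2) = ∫ x, Q x := by
    simp only [Complex.norm_real, norm_eq_abs, sq_abs, hQ]
  have e3 : (∫ x, (c ^ 2 * P x + a ^ 2 * Q x)) + lam * ∫ x, Q x =
      ∫ x, (c ^ 2 * P x + (a ^ 2 + lam) * Q x) := by
    rw [integral_add (hPi.const_mul _) (hQi.const_mul _),
      integral_add (hPi.const_mul _) (hQi.const_mul _)]
    simp only [integral_const_mul]
    ring
  rw [e1, e2, e3]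
  have hP0 : ∀ x, 0 ≤ P x := fun x => by simp only [hP]; positivity
  have hQ0 : ∀ x, 0 ≤ Q x := fun x => by simp only [hQ]; positivity
  have hb := integral_le_of_polar (F := fun x => c ^ 2 * P x + (a ^ 2 + lam) * Q x)
    (G := fun r => c ^ 2 * (r / (r ^ 2 + ε ^ 2)) + c ^ 2 * (4 * (a ^ 2 + lam)))
    (fun x => add_nonneg (mul_nonneg (sq_nonneg c) (hP0 x)) (mul_nonneg hK.le (hQ0 x)))
    (by
      have : ∀ r : ℝ, r ^ 2 + ε ^ 2 ≠ 0 := fun r => by positivity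
      exact ((continuous_const.mul (continuous_id.div (by fun_prop) this)).add
        continuous_const).continuousOn)
    (fun x hx => by simp [hPz x hx, hQz x hx])
    (by
      intro r θ hr hr2
      have hs : (1 + r * cos θ - 1) ^ 2 + (r * sin θ) ^ 2 = r ^ 2 := by
        linear_combination r ^ 2 * sin_sq_add_cos_sq θ
      set x : ℝ × ℝ := (1 + r * cos θ, r * sin θ) with hx
      have hxr : (x.1 - 1) ^ 2 + x.2 ^ 2 = r ^ 2 := hs
      have hPb : r * P x ≤ r / (r ^ 2 + ε ^ 2) := by
        have hd := deriv_smoothPos_sq_le (regLog ε x)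
        have hq : regDist ε x = r ^ 2 + ε ^ 2 := by unfold regDist; rw [hxr]
        have h5 : P x ≤ 1 / (r ^ 2 + ε ^ 2) := by
          simp only [hP]
          rw [hxr, hq, div_le_div_iff₀ (by positivity) (by positivity)]
          have : deriv smoothPos (regLog ε x) ^ 2 * r ^ 2 ≤ r ^ 2 + ε ^ 2 := by
            nlinarith [sq_nonneg r, sq_nonneg ε]
          nlinarith [sq_nonneg r, sq_nonneg ε]
        calc r * P x ≤ r * (1 / (r ^ 2 + ε ^ 2)) := by gcongr
          _ = r / (r ^ 2 + ε ^ 2) := by ring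
      have hQb : r * Q x ≤ c ^ 2 * 4 := by
        have hm := mul_moser_sq_le (ε := ε) hr hxr
        have hn4 : 1 / 4 ≤ x.1 ^ 2 + x.2 ^ 2 := sq_add_sq_ge (by rw [hxr]; nlinarith)
        simp only [hQ]
        rw [← mul_div_assoc, div_le_iff₀ (by linarith)]
        have : r * (c * moser ε x) ^ 2 ≤ c ^ 2 := by
          nlinarith [sq_nonneg c]
        nlinarith [sq_nonneg c]
      have i1 := mul_le_mul_of_nonneg_left hPb (sq_nonneg c)
      have i2 := mul_le_mul_of_nonneg_left hQb hK.le
      show r * (c ^ 2 * P x + (a ^ 2 + lam) * Q x) ≤ _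
      linarith)
  rw [integral_majorant _ _ _ hε] at hb
  have hε2 : ε ^ 2 ≤ 3 / 4 := by
    have h1 : ε * (n + 1) ≤ 1 := by
      have := mul_le_mul_of_nonneg_left (add_one_le_exp n) hε.le
      rwa [hεn, ← exp_add, neg_add_cancel, exp_zero, ← hεn] at this
    have h2 : ε ≤ 1 / 2 := by nlinarith
    nlinarith
  have hl : log (1 / 4 + ε ^ 2) ≤ 0 := log_nonpos (by positivity) (by linarith)
  have hle : log ε = -n := by rw [hεn, log_exp]
  rw [hle] at hb
  refine hb.trans ?_
  have : c ^ 2 * (1 / 2 * log (1 / 4 + ε ^ 2) - -n) + c ^ 2 * (4 * (a ^ 2 + lam)) / 2 ≤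
      c ^ 2 * (n + 2 * (a ^ 2 + lam)) := by
    nlinarith [sq_nonneg c]
  have := mul_le_mul_of_nonneg_left this (by positivity : 0 ≤ 2 * π)
  linarith

/-! ### The exponential integral and sharpness -/

/-- Lower bound from the square of side `ε = e^{-n}` centred at `(1,0)`, on which the Moser function
is at least `n - (1 + log 8 / 2)`. -/
lemma exp_integral_ge (β c n : ℝ) (hβ : 0 ≤ β) (hn : 1 + log 8 / 2 ≤ n) :
    4 / 9 * exp (-n) ^ 2 * (exp (β * (c ^ 2 * (n - (1 + log 8 / 2)) ^ 2)) - 1) ≤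
      ∫ x : ℝ × ℝ, (exp (β * ‖((c * moser (exp (-n)) x : ℝ) : ℂ)‖ ^ 2) - 1) /
        (x.1 ^ 2 + x.2 ^ 2) := by
  set ε := exp (-n) with hεn
  have hε : 0 < ε := exp_pos _
  have hmc : Continuous (moser ε) := (moser_contDiff hε).continuous
  simp only [Complex.norm_real, norm_eq_abs, sq_abs]
  set F : ℝ × ℝ → ℝ := fun x => (exp (β * (c * moser ε x) ^ 2) - 1) / (x.1 ^ 2 + x.2 ^ 2) with hF
  have hFi : Integrable F :=
    integrable_div (by fun_prop) fun x hx => by simp [moser_eq_zero hx]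
  have hF0 : ∀ x, 0 ≤ F x := fun x =>
    div_nonneg (sub_nonneg.2 (one_le_exp (by positivity))) (by positivity)
  have h8 : 0 ≤ log 8 := log_nonneg (by norm_num)
  have hε1 : ε ≤ 1 / 2 := by
    have := mul_le_mul_of_nonneg_left (add_one_le_exp n) hε.le
    rw [hεn, ← exp_add, neg_add_cancel, exp_zero, ← hεn] at this
    nlinarith
  set S : Set (ℝ × ℝ) := Set.Icc (1 - ε / 2) (1 + ε / 2) ×ˢ Set.Icc (-(ε / 2)) (ε / 2) with hS
  have hSm : MeasurableSet S := measurableSet_Icc.prod measurableSet_Icc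
  have hSv : volume.real S = ε ^ 2 := by
    rw [hS, Measure.volume_eq_prod, measureReal_prod_prod, Real.volume_real_Icc_of_le (by linarith),
      Real.volume_real_Icc_of_le (by linarith)]
    ring
  set V := 4 / 9 * (exp (β * (c ^ 2 * (n - (1 + log 8 / 2)) ^ 2)) - 1) with hV
  have hFS : ∀ x ∈ S, V ≤ F x := by
    rintro x ⟨⟨h1, h2⟩, h3, h4⟩
    have q1 : (x.1 - 1) ^ 2 ≤ (ε / 2) ^ 2 := sq_le_sq' (by linarith) (by linarith)
    have q2 : x.2 ^ 2 ≤ (ε / 2) ^ 2 := sq_le_sq' (by linarith) (by linarith)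
    have hT : n - log 8 / 2 ≤ regLog ε x := by
      have hpos := regDist_pos hε x
      have : log (4 * regDist ε x) ≤ log (8 * ε ^ 2) := by
        apply log_le_log (by positivity)
        unfold regDist
        nlinarith
      rw [log_mul (x := 8) (by norm_num) (by positivity), log_pow, hεn, log_exp] at this
      unfold regLog
      push_cast at this
      linarith
    have hM : n - (1 + log 8 / 2) ≤ moser ε x := by
      have := sub_one_le_smoothPos (regLog ε x)
      unfold moser; linarith
    have hM2 : (n - (1 + log 8 / 2)) ^ 2 ≤ moser ε x ^ 2 :=
      pow_le_pow_left₀ (by linarith) hM 2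
    have hnum : exp (β * (c ^ 2 * (n - (1 + log 8 / 2)) ^ 2)) ≤ exp (β * (c * moser ε x) ^ 2) := by
      rw [mul_pow]
      gcongr
    have hone : 1 ≤ exp (β * (c ^ 2 * (n - (1 + log 8 / 2)) ^ 2)) := one_le_exp (by positivity)
    have hlow : 0 < x.1 ^ 2 + x.2 ^ 2 := by
      have : 1 / 4 ≤ x.1 ^ 2 + x.2 ^ 2 := sq_add_sq_ge (by nlinarith)
      linarith
    have hup : x.1 ^ 2 + x.2 ^ 2 ≤ 9 / 4 := by nlinarith
    simp only [hF, hV]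
    rw [le_div_iff₀ hlow]
    nlinarith
  calc 4 / 9 * ε ^ 2 * (exp (β * (c ^ 2 * (n - (1 + log 8 / 2)) ^ 2)) - 1)
      = ∫ _ in S, V := by rw [setIntegral_const, hSv, hV, smul_eq_mul]; ring
    _ ≤ ∫ x in S, F x := by
        refine setIntegral_mono_on ?_ hFi.integrableOn hSm hFS
        refine integrableOn_const (isCompact_Icc.prod isCompact_Icc).measure_lt_top.ne
    _ ≤ ∫ x, F x := setIntegral_le_integral hFi (Filter.Eventually.of_forall hF0)

/-- Sharpness of the constant `4π` in the magnetic Trudinger–Moser inequality: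
for every `β > 4π` the supremum of `∫_{ℝ²} (e^{β|u|²} - 1)/|x|² dx` over all
`u ∈ C_0^∞(ℝ² \ {0})` with `∫ |∇_A u|² + λ ∫ |u|²/|x|² ≤ 1` is infinite. -/
theorem magnetic_trudinger_moser_sharp (a lam : ℝ) (ha0 : 0 ≤ a) (ha1 : a ≤ 1 / 2)
    (hlam : -a ^ 2 < lam) :
    ∀ β > 4 * π, ∀ C : ℝ, ∃ u : ℝ × ℝ → ℂ,
      ContDiff ℝ (⊤ : ℕ∞) u ∧ HasCompactSupport u ∧
      ((0, 0) : ℝ × ℝ) ∉ tsupport u ∧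
      (∫ x : ℝ × ℝ, magGradSq a u x) +
        lam * ∫ x : ℝ × ℝ, ‖u x‖ ^ 2 / (x.1 ^ 2 + x.2 ^ 2) ≤ 1 ∧
      C < ∫ x : ℝ × ℝ, (Real.exp (β * ‖u x‖ ^ 2) - 1) / (x.1 ^ 2 + x.2 ^ 2) := by
  intro β hβ C
  have hK : 0 < a ^ 2 + lam := by linarith
  have hβ0 : 0 < β := lt_trans (by positivity) hβ
  set D := 2 * (a ^ 2 + lam) with hD
  have hD0 : 0 < D := by positivity
  set B := 1 + log 8 / 2 with hB
  have h8 : 0 ≤ log 8 := log_nonneg (by norm_num)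
  set γ := β / (2 * π) with hγ
  have hγ2 : 0 < γ - 2 := by
    have : 2 < γ := by rw [hγ, lt_div_iff₀ (by positivity)]; linarith
    linarith
  -- The scale `ε = e^{-n}`, with `n` so large that `(γ - 2) n - γ (2 B + D)` exceeds `9 |C| / 4`.
  obtain ⟨n, hnB, hnC⟩ : ∃ n : ℝ, B ≤ n ∧ 9 / 4 * |C| < (γ - 2) * n - γ * (2 * B + D) := by
    refine ⟨max B ((9 / 4 * |C| + γ * (2 * B + D) + 1) / (γ - 2)), le_max_left _ _, ?_⟩
    have := (div_le_iff₀ hγ2).1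
      (le_max_right B ((9 / 4 * |C| + γ * (2 * B + D) + 1) / (γ - 2)))
    linarith
  have hn1 : 1 ≤ n := by linarith
  have hnD : 0 < n + D := by linarith
  set c := √(1 / (2 * π * (n + D))) with hc
  have hc2 : c ^ 2 = 1 / (2 * π * (n + D)) := sq_sqrt (by positivity)
  have hε : 0 < exp (-n) := exp_pos _
  have hz : ∀ x : ℝ × ℝ, 1 / 4 ≤ (x.1 - 1) ^ 2 + x.2 ^ 2 →
      ((c * moser (exp (-n)) x : ℝ) : ℂ) = 0 := fun x hx => by simp [moser_eq_zero hx]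
  refine ⟨fun x => ((c * moser (exp (-n)) x : ℝ) : ℂ), ?_, hasCompactSupport_of_disc hz, ?_, ?_, ?_⟩
  · exact Complex.ofRealCLM.contDiff.comp (contDiff_const.mul (moser_contDiff hε))
  · have hcl : IsClosed {x : ℝ × ℝ | (x.1 - 1) ^ 2 + x.2 ^ 2 ≤ 1 / 4} :=
      isClosed_le (by fun_prop) (by fun_prop)
    intro h0
    have := closure_minimal (fun x hx => ?_) hcl h0
    · norm_num at this
    · by_contra h
      exact hx (hz x (not_le.1 h).le)
  · refine (energy_le a lam c n hn1 hK).trans ?_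
    rw [hc2, ← hD, one_div, inv_mul_cancel₀ (by positivity)]
  · refine lt_of_lt_of_le ?_ (exp_integral_ge β c n hβ0.le hnB)
    rw [← hB]
    have hexp : (γ - 2) * n - γ * (2 * B + D) + 2 * n ≤ β * (c ^ 2 * (n - B) ^ 2) := by
      have e : β * (c ^ 2 * (n - B) ^ 2) = γ * ((n - B) ^ 2 / (n + D)) := by
        rw [hc2, hγ]; field_simp
      have hq : n - 2 * B - D ≤ (n - B) ^ 2 / (n + D) := by
        rw [le_div_iff₀ hnD]
        nlinarith [sq_nonneg (B + D)]
      rw [e]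
      nlinarith [mul_le_mul_of_nonneg_left hq (by linarith : 0 ≤ γ)]
    set m := (γ - 2) * n - γ * (2 * B + D) with hm
    have h1 : exp (-n) ^ 2 * exp (m + 2 * n) = exp m := by
      rw [sq, ← exp_add, ← exp_add]; ring_nf
    have h2 : exp (-n) ^ 2 ≤ 1 := pow_le_one₀ hε.le (exp_le_one_iff.2 (by linarith))
    have h3 := add_one_le_exp m
    have h4 := mul_le_mul_of_nonneg_left (exp_le_exp.2 hexp) (sq_nonneg (exp (-n)))
    have h5 := le_abs_self C
    nlinarith
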